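/- The number of positive integers n ≤ x such that there exists t with 2^t ≡ -1 (mod n) is at least c·x/log x for some constant c > 0 and all sufficiently large x. -/

import Mathlib

/-!
If `p ≡ 3 [MOD 8]` is prime, then `2` is not a square modulo `p`, so `2 ^ (p / 2) = -1` in `ZMod p`
by Euler's criterion. It remains to bound the number of such primes from below by a multiple of
`x / log x`, which we do for the primes `p ≡ a [MOD q]` with any `a` coprime to `q`, through the
Dirichlet-Mertens asymptotic `∑ p ≤ N, log p / p = log N / φ(q) + O(1)`: it forces
`∑ N < p ≤ K N, log p / p ≥ 1` for some constant `K`, while each of these terms is at most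
`log (K N) / N`.

By orthogonality of characters the asymptotic reduces to Mertens' first theorem and to
`∑ d ≤ N, χ(d) Λ(d) / d = O(1)` for `χ ≠ 1`. From `Λ * 1 = log` and Chebyshev's bound `ψ(N) = O(N)`
one gets `L(1, χ) ∑ d ≤ N, χ(d) Λ(d) / d = ∑ n ≤ N, χ(n) log n / n + O(1)`; the right-hand side is
bounded by Abel summation, and `L(1, χ) ≠ 0`.
-/

open Filter Asymptotics Topology ArithmeticFunction DirichletCharacter
open ArithmeticFunction.vonMangoldt (residueClass residueClass_apply)
open Finset

lemma tendsto_sum_Ioc_of_hasSum {M : Type*} [AddCommMonoid M] [TopologicalSpace M] {f : ℕ → M}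
    {a : M} (hf : HasSum f a) (hf₀ : f 0 = 0) :
    Tendsto (fun n ↦ ∑ k ∈ Ioc 0 n, f k) atTop (𝓝 a) := by
  refine (hf.tendsto_sum_nat.comp (tendsto_add_atTop_nat 1)).congr fun n ↦ ?_
  rw [Function.comp_apply, range_eq_Ico, sum_eq_sum_Ico_succ_bot n.succ_pos, hf₀, zero_add]
  exact sum_congr (Ico_add_one_add_one_eq_Ioc 0 n) fun _ _ ↦ rfl

section AbelSummation

variable {E : Type*} [NormedAddCommGroup E] [NormedSpace ℝ E] {f : ℕ → E} {g : ℕ → ℝ} {B : ℝ}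
  {m : ℕ}

lemma norm_sum_Ioc_smul_le_of_antitoneOn (hf : ∀ n, ‖∑ k ∈ range n, f k‖ ≤ B)
    (hg : AntitoneOn g (Set.Ioi m)) (hg₀ : ∀ k, m < k → 0 ≤ g k) (n : ℕ) :
    ‖∑ k ∈ Ioc m n, g k • f k‖ ≤ 2 * B * g (m + 1) := by
  have hB : 0 ≤ B := (norm_nonneg _).trans (hf 0)
  have hm := hg₀ (m + 1) m.lt_succ_self
  rcases le_or_gt n m with hnm | hmn
  · rw [Ioc_eq_empty_of_le hnm, sum_empty, norm_zero]
    positivity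
  obtain ⟨l, rfl⟩ : ∃ l, n = l + 1 := ⟨n - 1, by omega⟩
  have norm_smul_sum_le {c : ℝ} (hc : 0 ≤ c) (k : ℕ) : ‖c • ∑ i ∈ range k, f i‖ ≤ B * c := by
    rw [norm_smul, Real.norm_of_nonneg hc, mul_comm]
    exact mul_le_mul_of_nonneg_right (hf k) hc
  have hdiff : ‖∑ k ∈ Ioc m l, (g (k + 1) - g k) • ∑ i ∈ range (k + 1), f i‖
      ≤ B * (g (m + 1) - g (l + 1)) := by
    calc _ ≤ ∑ k ∈ Ioc m l, B * (g k - g (k + 1)) := by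
          refine norm_sum_le_of_le _ fun k hk ↦ ?_
          have hmk : m < k := (mem_Ioc.1 hk).1
          rw [← neg_sub, neg_smul, norm_neg]
          exact norm_smul_sum_le (sub_nonneg.2 (hg hmk (hmk.trans k.lt_succ_self) k.le_succ)) _
      _ = -B * ∑ k ∈ Ico (m + 1) (l + 1), (g (k + 1) - g k) := by
          rw [Ico_add_one_add_one_eq_Ioc, mul_sum]
          exact sum_congr rfl fun _ _ ↦ by ring
      _ = B * (g (m + 1) - g (l + 1)) := by
          rw [sum_Ico_sub _ (by omega)]
          ring
  rw [sum_Ioc_by_parts _ _ hmn, Nat.add_sub_cancel]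
  calc _ ≤ B * g (l + 1) + B * g (m + 1) + B * (g (m + 1) - g (l + 1)) :=
        norm_sub_le_of_le (norm_sub_le_of_le (norm_smul_sum_le (hg₀ _ hmn) _)
          (norm_smul_sum_le hm _)) hdiff
    _ = 2 * B * g (m + 1) := by ring

lemma isBigO_sum_Ioc_smul_of_antitoneOn (hf : ∀ n, ‖∑ k ∈ range n, f k‖ ≤ B)
    (hg : AntitoneOn g (Set.Ioi m)) (hg₀ : ∀ k, m < k → 0 ≤ g k) :
    (fun n ↦ ∑ k ∈ Ioc 0 n, g k • f k) =O[atTop] (fun _ ↦ (1 : ℝ)) := by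
  refine .of_bound (‖∑ k ∈ Ioc 0 m, g k • f k‖ + 2 * B * g (m + 1)) ?_
  filter_upwards [eventually_ge_atTop m] with n hn
  rw [← sum_Ioc_consecutive _ m.zero_le hn, norm_one, mul_one]
  exact norm_add_le_of_le le_rfl (norm_sum_Ioc_smul_le_of_antitoneOn hf hg hg₀ n)

end AbelSummation

lemma antitoneOn_natCast_log_div_self : AntitoneOn (fun n : ℕ ↦ Real.log n / n) (Set.Ioi 2) := by
  have exp_one_le {n : ℕ} (hn : 2 < n) : Real.exp 1 ≤ n :=
    Real.exp_one_lt_three.le.trans (mod_cast hn)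
  exact fun m hm n hn hmn ↦
    Real.log_div_self_antitoneOn (exp_one_le hm) (exp_one_le hn) (mod_cast hmn)

lemma sum_Ioc_log_mul_eq_sum_vonMangoldt_mul_sum {f : ℕ → ℂ}
    (hf : ∀ m n, f (m * n) = f m * f n) (N : ℕ) :
    ∑ n ∈ Ioc 0 N, Real.log n * f n
      = ∑ d ∈ Ioc 0 N, Λ d * f d * ∑ e ∈ Ioc 0 (N / d), f e := by
  let u : ArithmeticFunction ℂ := ⟨fun d ↦ Λ d * f d, by simp⟩
  let v : ArithmeticFunction ℂ := ⟨fun e ↦ if e = 0 then 0 else f e, by simp⟩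
  have huv (n : ℕ) : (u * v) n = Real.log n * f n := by
    rw [mul_apply, ← vonMangoldt_sum, Complex.ofReal_sum, sum_mul,
      ← Nat.sum_divisorsAntidiagonal (fun d _ ↦ (Λ d * f n : ℂ))]
    refine sum_congr rfl fun ⟨d, e⟩ hde ↦ ?_
    obtain ⟨rfl, hn⟩ := Nat.mem_divisorsAntidiagonal.1 hde
    simp only [u, v, coe_mk, right_ne_zero_of_mul hn, if_false, hf, mul_assoc]
  simp only [← huv, sum_Ioc_mul_eq_sum_sum]
  refine sum_congr rfl fun d _ ↦ congrArg _ <| sum_congr rfl fun e he ↦ ?_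
  simp only [v, coe_mk, (mem_Ioc.1 he).1.ne', if_false]

lemma sum_Ioc_vonMangoldt_le (N : ℕ) : ∑ d ∈ Ioc 0 N, Λ d ≤ (Real.log 4 + 4) * N := by
  simpa only [Chebyshev.psi, Nat.floor_natCast] using
    Chebyshev.psi_le_const_mul_self (x := (N : ℝ)) N.cast_nonneg

lemma sum_Ioc_log_eq_log_factorial (N : ℕ) :
    ∑ n ∈ Ioc 0 N, Real.log n = Real.log N.factorial := by
  rw [← prod_Ico_id_eq_factorial, Nat.cast_prod, Real.log_prod]
  · rfl
  · exact fun n hn ↦ Nat.cast_ne_zero.2 (Nat.one_le_iff_ne_zero.1 (mem_Ico.1 hn).1)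

lemma sum_Ioc_vonMangoldt_mul_floor (N : ℕ) :
    ∑ d ∈ Ioc 0 N, Λ d * (N / d : ℕ) = Real.log N.factorial := by
  rw [← sum_Ioc_mul_zeta_eq_sum, vonMangoldt_mul_zeta]
  exact sum_Ioc_log_eq_log_factorial N

lemma abs_log_factorial_sub_le (N : ℕ) : |Real.log N.factorial - N * Real.log N| ≤ N := by
  rcases N.eq_zero_or_pos with rfl | hN
  · simp
  have hup : Real.log N.factorial ≤ N * Real.log N := by
    rw [← Real.log_pow]
    exact Real.log_le_log (by positivity) (mod_cast N.factorial_le_pow)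
  have hlo : N * Real.log N - N ≤ Real.log N.factorial := by
    have := Stirling.le_log_factorial_stirling hN.ne'
    have := Real.log_natCast_nonneg N
    have : 0 ≤ Real.log (2 * Real.pi) := Real.log_nonneg (by linarith [Real.pi_gt_three])
    linarith
  rw [abs_le]
  constructor <;> linarith

lemma isBigO_sum_vonMangoldt_div_sub_log :
    (fun N : ℕ ↦ ∑ d ∈ Ioc 0 N, Λ d / d - Real.log N) =O[atTop] (fun _ ↦ (1 : ℝ)) := by
  refine .of_bound (Real.log 4 + 5) ?_
  filter_upwards [eventually_gt_atTop 0] with N hN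
  have hN : (0 : ℝ) < N := mod_cast hN
  have hfloor : |N * ∑ d ∈ Ioc 0 N, Λ d / d - Real.log N.factorial| ≤ (Real.log 4 + 4) * N := by
    rw [← sum_Ioc_vonMangoldt_mul_floor, mul_sum, ← sum_sub_distrib]
    refine (abs_sum_le_sum_abs _ _).trans <| (sum_le_sum fun d _ ↦ ?_).trans
      (sum_Ioc_vonMangoldt_le N)
    have hfract : |(N : ℝ) / d - (N / d : ℕ)| ≤ 1 := by
      have := Nat.floor_le (by positivity : 0 ≤ (N : ℝ) / d)
      have := Nat.lt_floor_add_one ((N : ℝ) / d)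
      rw [← Nat.floor_div_eq_div (K := ℝ), abs_le]
      constructor <;> linarith
    calc |N * (Λ d / d) - Λ d * (N / d : ℕ)| = Λ d * |(N : ℝ) / d - (N / d : ℕ)| := by
          rw [mul_div_left_comm, ← mul_sub, abs_mul, abs_of_nonneg vonMangoldt_nonneg]
      _ ≤ Λ d := mul_le_of_le_one_right vonMangoldt_nonneg hfract
  rw [norm_one, mul_one, Real.norm_eq_abs]
  refine le_of_mul_le_mul_left ?_ hN
  calc N * |∑ d ∈ Ioc 0 N, Λ d / d - Real.log N|
      = |(N * ∑ d ∈ Ioc 0 N, Λ d / d - Real.log N.factorial)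
          + (Real.log N.factorial - N * Real.log N)| := by
        rw [sub_add_sub_cancel, ← mul_sub, abs_mul, Nat.abs_cast]
    _ ≤ (Real.log 4 + 4) * N + N :=
        (abs_add_le _ _).trans <| add_le_add hfloor (abs_log_factorial_sub_le N)
    _ = N * (Real.log 4 + 5) := by ring

lemma summable_vonMangoldt_non_primes_div :
    Summable fun n : ℕ ↦ (if n.Prime then 0 else Λ n) / n := by
  simpa only [residueClass, Subsingleton.elim _ (0 : ZMod 1), Set.ofPred_true, Set.indicator_univ]
    using vonMangoldt.summable_residueClass_non_primes_div (0 : ZMod 1)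

lemma summable_vonMangoldt_non_coprime_div {q : ℕ} (hq : q ≠ 0) :
    Summable fun n : ℕ ↦ (if n.Coprime q then 0 else Λ n) / n := by
  have hprimes : Summable fun n : ℕ ↦ if n ∈ q.primeFactors then Λ n / n else 0 :=
    summable_of_ne_finset_zero fun n hn ↦ if_neg hn
  refine (hprimes.add summable_vonMangoldt_non_primes_div).of_nonneg_of_le (fun n ↦ ?_) fun n ↦ ?_
  · split_ifs <;> positivity [vonMangoldt_nonneg (n := n)]
  · by_cases hnq : n.Coprime q
    · simp only [if_pos hnq, zero_div]
      split_ifs <;> positivity [vonMangoldt_nonneg (n := n)]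
    by_cases hn : n.Prime
    · have : n ∈ q.primeFactors :=
        Nat.mem_primeFactors.2 ⟨hn, by_contra (hnq <| hn.coprime_iff_not_dvd.2 ·), hq⟩
      simp only [if_neg hnq, if_pos hn, if_pos this, zero_div, add_zero, le_refl]
    · have : n ∉ q.primeFactors := (hn <| Nat.prime_of_mem_primeFactors ·)
      simp only [if_neg hnq, if_neg hn, if_neg this, zero_add, le_refl]

section Periodic

variable {q : ℕ} [NeZero q]

lemma sum_range_natCast_zmod {M : Type*} [AddCommMonoid M] (f : ZMod q → M) :
    ∑ k ∈ range q, f k = ∑ a, f a :=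
  sum_nbij' (fun k ↦ (k : ZMod q)) ZMod.val (fun _ _ ↦ mem_univ _)
    (fun a _ ↦ mem_range.2 a.val_lt) (fun _ hk ↦ ZMod.val_cast_of_lt (mem_range.1 hk))
    (fun a _ ↦ ZMod.natCast_zmod_val a) fun _ _ ↦ rfl

lemma norm_sum_range_natCast_zmod_le {E : Type*} [SeminormedAddCommGroup E]
    {f : ZMod q → E} (hf : ∑ a, f a = 0) (n : ℕ) :
    ‖∑ k ∈ range n, f k‖ ≤ ∑ a, ‖f a‖ := by
  induction n using Nat.strong_induction_on with
  | _ n ih =>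
  rcases le_or_gt q n with hqn | hnq
  · obtain ⟨m, rfl⟩ := Nat.exists_eq_add_of_le hqn
    simpa only [sum_range_add, sum_range_natCast_zmod, hf, zero_add, Nat.cast_add,
      CharP.cast_eq_zero] using ih m (Nat.lt_add_of_pos_left q.pos_of_neZero)
  · calc ‖∑ k ∈ range n, f k‖ ≤ ∑ k ∈ range n, ‖f k‖ := norm_sum_le _ _
      _ ≤ ∑ k ∈ range q, ‖f k‖ :=
          sum_le_sum_of_subset_of_nonneg (range_mono hnq.le) fun _ _ _ ↦ norm_nonneg _
      _ = ∑ a, ‖f a‖ := sum_range_natCast_zmod fun a ↦ ‖f a‖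

end Periodic

lemma norm_LSeries_sub_sum_term_le {f : ℕ → ℂ} {B s : ℝ} (hf : ∀ n, ‖∑ k ∈ range n, f k‖ ≤ B)
    (hs : 0 ≤ s) (hsum : LSeriesSummable f s) (n : ℕ) :
    ‖LSeries f s - ∑ k ∈ Ioc 0 n, LSeries.term f s k‖ ≤ 2 * B * ((n + 1 : ℕ) : ℝ) ^ (-s) := by
  have hlim : Tendsto (fun N ↦ ∑ k ∈ Ioc 0 N, LSeries.term f s k) atTop (𝓝 (LSeries f s)) :=
    tendsto_sum_Ioc_of_hasSum hsum.hasSum (LSeries.term_zero ..)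
  refine le_of_tendsto (hlim.sub_const _).norm ?_
  filter_upwards [eventually_ge_atTop n] with N hN
  have hterm (k) (hk : k ∈ Ioc n N) : LSeries.term f s k = (k : ℝ) ^ (-s) • f k := by
    rw [LSeries.term_of_ne_zero (n.zero_le.trans_lt (mem_Ioc.1 hk).1).ne', Complex.real_smul,
      Complex.ofReal_cpow k.cast_nonneg, Complex.ofReal_neg, Complex.cpow_neg,
      Complex.ofReal_natCast, div_eq_inv_mul]
  rw [← sum_Ioc_consecutive _ n.zero_le hN, add_sub_cancel_left, sum_congr rfl hterm]
  refine norm_sum_Ioc_smul_le_of_antitoneOn hf (fun k hk l _ hkl ↦ ?_)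
    (fun k _ ↦ Real.rpow_nonneg k.cast_nonneg _) N
  have hk0 : 0 < k := n.zero_le.trans_lt hk
  exact Real.rpow_le_rpow_of_nonpos (by positivity) (by gcongr) (neg_nonpos.2 hs)

section LowerBound

variable {f : ℕ → ℝ} {δ : ℝ}

lemma exists_one_le_sum_Ioc_of_isBigO (hδ : 0 < δ)
    (hf : (fun N : ℕ ↦ ∑ n ∈ Ioc 0 N, f n - δ * Real.log N) =O[atTop] (fun _ ↦ (1 : ℝ))) :
    ∃ K : ℕ, 0 < K ∧ ∀ N, 0 < N → 1 ≤ ∑ n ∈ Ioc N (K * N), f n := by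
  obtain ⟨C, hC⟩ := isBigO_one_nat_atTop_iff.1 hf
  obtain ⟨K, hK⟩ := exists_nat_ge (Real.exp ((2 * C + 1) / δ))
  have hK₀ : (0 : ℝ) < K := (Real.exp_pos _).trans_le hK
  have hlogK : 2 * C + 1 ≤ δ * Real.log K := by
    rwa [← div_le_iff₀' hδ, Real.le_log_iff_exp_le hK₀]
  refine ⟨K, mod_cast hK₀, fun N hN ↦ ?_⟩
  have hKN := abs_le.1 (hC (K * N))
  have hN' := abs_le.1 (hC N)
  rw [← sum_Ioc_consecutive _ N.zero_le (Nat.le_mul_of_pos_left N (mod_cast hK₀)), Nat.cast_mul,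
    Real.log_mul hK₀.ne' (by positivity)] at hKN
  linarith [hKN.1, hN'.2]

variable {P : ℕ → Prop} [DecidablePred P]

lemma sum_Ioc_filter_log_div_le {N M : ℕ} (hN : 0 < N) :
    ∑ n ∈ Ioc N M with P n, Real.log n / n ≤ #{n ∈ Ioc 0 M | P n} * (Real.log M / N) := by
  have := Real.log_natCast_nonneg M
  have hterm (n) (hn : n ∈ {n ∈ Ioc N M | P n}) : Real.log n / n ≤ Real.log M / N := by
    obtain ⟨hNn, hnM⟩ := mem_Ioc.1 (mem_filter.1 hn).1
    have hn₀ : 0 < n := hN.trans hNn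
    gcongr
  refine (sum_le_card_nsmul _ _ _ hterm).trans ?_
  rw [nsmul_eq_mul]
  gcongr

lemma exists_mul_div_log_le_card_of_isBigO (hδ : 0 < δ)
    (hP : (fun N : ℕ ↦ ∑ n ∈ Ioc 0 N with P n, Real.log n / n - δ * Real.log N)
      =O[atTop] (fun _ ↦ (1 : ℝ))) :
    ∃ c : ℝ, 0 < c ∧ ∀ᶠ x : ℕ in atTop, c * x / Real.log x ≤ #{n ∈ Ioc 0 x | P n} := by
  simp only [sum_filter] at hP
  obtain ⟨K, hK, hsum⟩ := exists_one_le_sum_Ioc_of_isBigO hδ hP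
  refine ⟨1 / (2 * K), by positivity, ?_⟩
  filter_upwards [eventually_ge_atTop K, eventually_gt_atTop 1] with x hKx hx
  have hN : 0 < x / K := Nat.div_pos hKx hK
  have hxN : (x : ℝ) ≤ 2 * K * (x / K : ℕ) := by
    have : x < K * (x / K + 1) := Nat.lt_mul_div_succ x hK
    exact_mod_cast (by nlinarith : x ≤ 2 * K * (x / K))
  have hlog : 0 < Real.log x := Real.log_pos (mod_cast hx)
  have hone : 1 ≤ #{n ∈ Ioc 0 x | P n} * (Real.log x / (x / K : ℕ)) := by
    refine (hsum _ hN).trans ?_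
    rw [← sum_filter]
    refine (sum_Ioc_filter_log_div_le hN).trans ?_
    have hKN : K * (x / K) ≤ x := Nat.mul_div_le x K
    have : 0 < K * (x / K) := by positivity
    gcongr
  rw [← mul_div_assoc, one_le_div (by positivity)] at hone
  rw [div_le_iff₀ hlog, div_mul_eq_mul_div, one_mul, div_le_iff₀' (by positivity)]
  exact hxN.trans (mul_le_mul_of_nonneg_left hone (by positivity))

end LowerBound

section DirichletCharacter

variable {q : ℕ} [NeZero q] {χ : DirichletCharacter ℂ q}

-- The bound on the tail is uniform in `s > 1`, so it passes to the limit `s → 1⁺`, where the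
-- `L`-series converges only conditionally.
lemma norm_LFunction_one_sub_sum_le {B : ℝ}
    (hB : ∀ n, ‖∑ k ∈ range n, χ k‖ ≤ B) (hχ : χ ≠ 1) (n : ℕ) :
    ‖LFunction χ 1 - ∑ k ∈ Ioc 0 n, χ k / k‖ ≤ 2 * B / (n + 1) := by
  have hcast : Tendsto (fun s : ℝ ↦ (s : ℂ)) (𝓝[>] 1) (𝓝 1) :=
    (Complex.continuous_ofReal.tendsto' 1 1 Complex.ofReal_one).mono_left nhdsWithin_le_nhds
  have hL : Tendsto (fun s : ℝ ↦ LFunction χ s) (𝓝[>] 1) (𝓝 (LFunction χ 1)) :=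
    ((differentiable_LFunction hχ).continuous.tendsto 1).comp hcast
  have hterm (k) (hk : k ∈ Ioc 0 n) :
      Tendsto (fun s : ℝ ↦ LSeries.term (χ ·) s k) (𝓝[>] 1) (𝓝 (χ k / k)) := by
    have hk0 : k ≠ 0 := (mem_Ioc.1 hk).1.ne'
    have hk : (k : ℂ) ≠ 0 := mod_cast hk0
    simp only [LSeries.term_of_ne_zero hk0]
    have hpow := hcast.const_cpow (.inl hk)
    rw [Complex.cpow_one] at hpow
    exact tendsto_const_nhds.div hpow hk
  have hbound : Tendsto (fun s : ℝ ↦ 2 * B * ((n + 1 : ℕ) : ℝ) ^ (-s)) (𝓝[>] 1)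
      (𝓝 (2 * B / (n + 1))) := by
    have hcont : Continuous fun s : ℝ ↦ 2 * B * ((n + 1 : ℕ) : ℝ) ^ (-s) := by
      fun_prop (disch := positivity)
    refine (hcont.tendsto' 1 _ ?_).mono_left nhdsWithin_le_nhds
    rw [Real.rpow_neg_one, Nat.cast_succ, div_eq_mul_inv]
  refine le_of_tendsto_of_tendsto (hL.sub (tendsto_finsetSum _ hterm)).norm hbound ?_
  filter_upwards [self_mem_nhdsWithin] with s hs
  have hs1 : 1 < (s : ℂ).re := hs
  rw [LFunction_eq_LSeries χ hs1]
  exact norm_LSeries_sub_sum_term_le hB (zero_le_one.trans hs.le)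
    (LSeriesSummable_of_one_lt_re χ hs1) n

lemma norm_LFunction_one_mul_sum_sub_le {B : ℝ}
    (hB : ∀ n, ‖∑ k ∈ range n, χ k‖ ≤ B) (hχ : χ ≠ 1) (N : ℕ) :
    ‖LFunction χ 1 * ∑ d ∈ Ioc 0 N, Λ d * (χ d / d) - ∑ n ∈ Ioc 0 N, Real.log n * (χ n / n)‖
      ≤ 2 * B * (Real.log 4 + 4) := by
  have hB₀ : 0 ≤ B := (norm_nonneg _).trans (hB 0)
  have hmul (m n : ℕ) : χ (m * n : ℕ) / (m * n : ℕ) = χ m / m * (χ n / n) := by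
    rw [Nat.cast_mul, map_mul, Nat.cast_mul, mul_div_mul_comm]
  rw [sum_Ioc_log_mul_eq_sum_vonMangoldt_mul_sum hmul, mul_comm, sum_mul, ← sum_sub_distrib]
  simp only [← mul_sub]
  have hterm (d) (hd : d ∈ Ioc 0 N) :
      ‖Λ d * (χ d / d) * (LFunction χ 1 - ∑ e ∈ Ioc 0 (N / d), χ e / e)‖ ≤ Λ d * (2 * B / N) := by
    obtain ⟨hd₀, hdN⟩ := mem_Ioc.1 hd
    have hN₀ : 0 < N := hd₀.trans_le hdN
    have hdN : (N : ℝ) ≤ d * ((N / d : ℕ) + 1) := mod_cast (Nat.lt_mul_div_succ N hd₀).le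
    rw [norm_mul, norm_mul, Complex.norm_real, Real.norm_of_nonneg vonMangoldt_nonneg, mul_assoc]
    refine mul_le_mul_of_nonneg_left ?_ vonMangoldt_nonneg
    calc _ ≤ 1 / d * (2 * B / ((N / d : ℕ) + 1)) := by
          rw [norm_div, Complex.norm_natCast]
          gcongr
          · exact χ.norm_le_one d
          · exact norm_LFunction_one_sub_sum_le hB hχ _
      _ = 2 * B / (d * ((N / d : ℕ) + 1)) := by rw [div_mul_div_comm, one_mul]
      _ ≤ 2 * B / N := by gcongr
  calc _ ≤ (∑ d ∈ Ioc 0 N, Λ d) * (2 * B / N) := by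
        rw [sum_mul]
        exact norm_sum_le_of_le _ hterm
    _ ≤ (Real.log 4 + 4) * N * (2 * B / N) := by gcongr; exact sum_Ioc_vonMangoldt_le N
    _ = 2 * B * (Real.log 4 + 4) * (N / N) := by ring
    _ ≤ 2 * B * (Real.log 4 + 4) := mul_le_of_le_one_right (by positivity) (div_self_le_one _)

lemma isBigO_sum_vonMangoldt_mul_char_div (hχ : χ ≠ 1) :
    (fun N : ℕ ↦ ∑ d ∈ Ioc 0 N, Λ d * (χ d / d)) =O[atTop] (fun _ ↦ (1 : ℝ)) := by
  have hB := norm_sum_range_natCast_zmod_le (χ.sum_eq_zero_of_ne_one hχ)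
  have hlog : (fun N : ℕ ↦ ∑ n ∈ Ioc 0 N, Real.log n * (χ n / n)) =O[atTop] (fun _ ↦ (1 : ℝ)) := by
    refine (isBigO_sum_Ioc_smul_of_antitoneOn hB antitoneOn_natCast_log_div_self fun k _ ↦
      div_nonneg (Real.log_natCast_nonneg k) k.cast_nonneg).congr_left fun N ↦
        sum_congr rfl fun n _ ↦ ?_
    rw [Complex.real_smul, Complex.ofReal_div, Complex.ofReal_natCast]
    ring
  have hdiff := isBigO_one_nat_atTop_iff.2 ⟨_, norm_LFunction_one_mul_sum_sub_le hB hχ⟩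
  refine (isBigO_const_mul_left_iff (LFunction_apply_one_ne_zero hχ)).1 ?_
  simpa only [sub_add_cancel] using hdiff.add hlog

lemma isBigO_sum_vonMangoldt_mul_one_div_sub_log :
    (fun N : ℕ ↦ ∑ d ∈ Ioc 0 N, Λ d * ((1 : DirichletCharacter ℂ q) d / d) - Real.log N)
      =O[atTop] (fun _ ↦ (1 : ℝ)) := by
  have hnc := (tendsto_sum_Ioc_of_hasSum (summable_vonMangoldt_non_coprime_div
    (NeZero.ne q)).hasSum (by simp)).isBigO_one ℝ
  have hΛ := isBigO_sum_vonMangoldt_div_sub_log.sub hnc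
  refine (Complex.isBigO_ofReal_left.2 hΛ).congr_left fun N ↦ ?_
  rw [sub_right_comm, ← sum_sub_distrib, Complex.ofReal_sub, Complex.ofReal_sum]
  refine congrArg (· - _) <| sum_congr rfl fun d _ ↦ ?_
  by_cases hd : d.Coprime q
  · rw [MulChar.one_apply ((ZMod.isUnit_iff_coprime d q).2 hd), if_pos hd]
    simp [div_eq_mul_inv]
  · rw [MulChar.map_nonunit _ (mt (ZMod.isUnit_iff_coprime d q).1 hd), if_neg hd]
    simp

lemma sum_Ioc_residueClass_div_eq_sum_char {a : ZMod q} (ha : IsUnit a) (N : ℕ) :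
    ((∑ d ∈ Ioc 0 N, residueClass a d / d : ℝ) : ℂ)
      = (q.totient : ℂ)⁻¹ * ∑ χ : DirichletCharacter ℂ q,
          χ a⁻¹ * ∑ d ∈ Ioc 0 N, Λ d * (χ d / d) := by
  push_cast [residueClass_apply ha]
  simp only [mul_sum, sum_div]
  rw [sum_comm]
  exact sum_congr rfl fun χ _ ↦ sum_congr rfl fun d _ ↦ by ring

lemma isBigO_sum_residueClass_div_sub_log {a : ZMod q} (ha : IsUnit a) :
    (fun N : ℕ ↦ ∑ d ∈ Ioc 0 N, residueClass a d / d - (q.totient : ℝ)⁻¹ * Real.log N)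
      =O[atTop] (fun _ ↦ (1 : ℝ)) := by
  have hchar (χ : DirichletCharacter ℂ q) :
      (fun N : ℕ ↦ ∑ d ∈ Ioc 0 N, Λ d * (χ d / d) - if χ = 1 then (Real.log N : ℂ) else 0)
        =O[atTop] (fun _ ↦ (1 : ℝ)) := by
    split_ifs with hχ
    · exact hχ ▸ isBigO_sum_vonMangoldt_mul_one_div_sub_log
    · simpa only [sub_zero] using isBigO_sum_vonMangoldt_mul_char_div hχ
  have hsum := (IsBigO.sum fun χ (_ : χ ∈ univ) ↦ (hchar χ).const_mul_left (χ a⁻¹)).const_mul_left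
    (q.totient : ℂ)⁻¹
  have hone : (1 : DirichletCharacter ℂ q) a⁻¹ = 1 :=
    MulChar.one_apply (.of_mul_eq_one _ (ZMod.inv_mul_of_unit a ha))
  refine Complex.isBigO_ofReal_left.1 <| hsum.congr_left fun N ↦ ?_
  rw [Complex.ofReal_sub, sum_Ioc_residueClass_div_eq_sum_char ha, Complex.ofReal_mul,
    Complex.ofReal_inv, Complex.ofReal_natCast, ← mul_sub]
  simp only [Finset.sum_apply, mul_sub, sum_sub_distrib, mul_ite, mul_zero, sum_ite_eq', mem_univ,
    if_true, hone, one_mul]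

lemma isBigO_sum_primes_log_div_sub_log {a : ZMod q} (ha : IsUnit a) :
    (fun N : ℕ ↦ ∑ p ∈ Ioc 0 N with Nat.Prime p ∧ (p : ZMod q) = a, Real.log p / p
      - (q.totient : ℝ)⁻¹ * Real.log N) =O[atTop] (fun _ ↦ (1 : ℝ)) := by
  have hnp := (tendsto_sum_Ioc_of_hasSum (vonMangoldt.summable_residueClass_non_primes_div a).hasSum
    (by simp)).isBigO_one ℝ
  refine ((isBigO_sum_residueClass_div_sub_log ha).sub hnp).congr_left fun N ↦ ?_
  rw [sub_right_comm, ← sum_sub_distrib, sum_filter]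
  refine congrArg (· - _) <| sum_congr rfl fun p _ ↦ ?_
  by_cases hp : p.Prime <;> by_cases hpa : (p : ZMod q) = a <;>
    simp [residueClass, hp, hpa, vonMangoldt_apply_prime]

lemma exists_mul_div_log_le_card_primes_natCast_eq {a : ZMod q} (ha : IsUnit a) :
    ∃ c : ℝ, 0 < c ∧ ∀ᶠ x : ℕ in atTop,
      c * x / Real.log x ≤ #{p ∈ Ioc 0 x | Nat.Prime p ∧ (p : ZMod q) = a} :=
  exists_mul_div_log_le_card_of_isBigO
    (inv_pos.2 <| mod_cast Nat.totient_pos.2 q.pos_of_neZero) (isBigO_sum_primes_log_div_sub_log ha)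

end DirichletCharacter

lemma pow_div_two_eq_neg_one_of_not_isSquare {p : ℕ} [Fact p.Prime] {a : ZMod p}
    (ha : ¬IsSquare a) : a ^ (p / 2) = -1 := by
  have ha₀ : a ≠ 0 := by
    rintro rfl
    exact ha (.zero)
  exact (ZMod.pow_div_two_eq_neg_one_or_one p ha₀).resolve_left <|
    mt (ZMod.euler_criterion p ha₀).2 ha

lemma exists_two_pow_eq_neg_one_of_natCast_eq_three {p : ℕ} (hp : p.Prime)
    (hp₃ : (p : ZMod 8) = 3) : ∃ t : ℕ, 0 < t ∧ (2 : ZMod p) ^ t = -1 := by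
  have := Fact.mk hp
  have hmod : p % 8 = 3 := (ZMod.natCast_eq_natCast_iff' p 3 8).1 hp₃
  have hsq : ¬IsSquare (2 : ZMod p) := by
    rw [ZMod.exists_sq_eq_two_iff (by omega)]
    omega
  exact ⟨p / 2, by omega, pow_div_two_eq_neg_one_of_not_isSquare hsq⟩

theorem stmt_13 :
    ∃ c : ℝ, 0 < c ∧ ∃ N : ℕ, ∀ x : ℕ, N ≤ x →
      c * x / Real.log x ≤
        (Nat.card {n : ℕ | 0 < n ∧ n ≤ x ∧ ∃ t : ℕ, 0 < t ∧ (2 : ZMod n) ^ t = -1} : ℝ) := by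
  obtain ⟨c, hc, hcount⟩ :=
    exists_mul_div_log_le_card_primes_natCast_eq (q := 8) (a := 3) (by decide)
  obtain ⟨N, hN⟩ := eventually_atTop.1 hcount
  refine ⟨c, hc, N, fun x hx ↦ (hN x hx).trans ?_⟩
  rw [← Set.ncard_coe_finset, ← Nat.card_coe_set_eq]
  have hfin : {n : ℕ | 0 < n ∧ n ≤ x ∧ ∃ t : ℕ, 0 < t ∧ (2 : ZMod n) ^ t = -1}.Finite :=
    (Set.finite_Iic x).subset fun n hn ↦ hn.2.1
  refine Nat.cast_le.2 <| Nat.card_mono hfin fun p hp ↦ ?_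
  obtain ⟨hpx, hp, hp₃⟩ := mem_filter.1 hp
  exact ⟨(mem_Ioc.1 hpx).1, (mem_Ioc.1 hpx).2, exists_two_pow_eq_neg_one_of_natCast_eq_three hp hp₃⟩
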